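/- For a Lipschitz spinor κ = (ξ,η), define the complement κ̌ = (η', −ξ') where ' is the grade involution. Then κ̌ is again a Lipschitz spinor, the generalised Hermitian form satisfies ⟨κ, κ̌⟩ = conj(ξ)η' − conj(η)ξ' = 0, and for all x, y ∈ Cl(0,n) the real inner product (κx | κ̌y) = Re(conj(ξx)(η'y) − conj(ηx)(ξ'y)) vanishes. -/

import Mathlib

open CliffordAlgebra

noncomputable section

namespace PaperCliff

noncomputable instance : Invertible (2 : ℝ) := invertibleOfNonzero two_ne_zero

/-- The quadratic form on `ℝ^{p,q}`: `p` generators of square `+1`, `q` of square `-1`. -/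
def sigQ (p q : ℕ) : QuadraticForm ℝ (Fin (p + q) → ℝ) :=
  QuadraticMap.weightedSumSquares ℝ
    (fun i : Fin (p + q) => if (i : ℕ) < p then (1 : ℝ) else -1)

/-- The negative-definite quadratic form for `Cl(0,n)`. -/
def negQ (n : ℕ) : QuadraticForm ℝ (Fin n → ℝ) :=
  QuadraticMap.weightedSumSquares ℝ (fun _ : Fin n => (-1 : ℝ))

variable {M : Type*} [AddCommGroup M] [Module ℝ M]

/-- Clifford conjugation: composite of the grade involution and reversal. -/
def cconj {Q : QuadraticForm ℝ M} (x : CliffordAlgebra Q) : CliffordAlgebra Q :=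
  reverse (involute x)

/-- The paravectors `ℝ ⊕ ℝ^{p,q}` inside the Clifford algebra. -/
def paravec (Q : QuadraticForm ℝ M) : Submodule ℝ (CliffordAlgebra Q) :=
  LinearMap.range (Algebra.linearMap ℝ (CliffordAlgebra Q)) ⊔ LinearMap.range (ι Q)

/-- The real (degree-zero) component of an element of the Clifford algebra,
via the canonical linear isomorphism with the exterior algebra. -/
def clRe {Q : QuadraticForm ℝ M} (x : CliffordAlgebra Q) : ℝ :=
  ExteriorAlgebra.algebraMapInv (CliffordAlgebra.equivExterior Q x)

/-- The reduced basis monomial `i_{j₁} ⋯ i_{j_k}` for a finite set of indices (in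
increasing order). -/
def mono {m : ℕ} (Q : QuadraticForm ℝ (Fin m → ℝ)) (s : Finset (Fin m)) :
    CliffordAlgebra Q :=
  ((s.sort (· ≤ ·)).map fun j => ι Q (Pi.single j 1)).prod

/-- The (paravector) Lipschitz group, as a subgroup of the units: the group generated by
invertible paravectors. -/
def lipUnits (Q : QuadraticForm ℝ M) : Subgroup (CliffordAlgebra Q)ˣ :=
  Subgroup.closure {u : (CliffordAlgebra Q)ˣ | (u : CliffordAlgebra Q) ∈ paravec Q}

/-- The underlying set of the paravector Lipschitz group `$Γ`. -/
def lipGrp (Q : QuadraticForm ℝ M) : Set (CliffordAlgebra Q) :=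
  {x | ∃ u ∈ lipUnits Q, (u : CliffordAlgebra Q) = x}

/-- The Lipschitz monoid `$Γ^▷ = $Γ ∪ {0}`. -/
def lipMon (Q : QuadraticForm ℝ M) : Set (CliffordAlgebra Q) :=
  insert 0 (lipGrp Q)

/-- A Lipschitz spinor: a pair of elements of the Lipschitz monoid, not both zero,
with `ξ ⬝ conj η` a paravector. -/
def IsSpinor (Q : QuadraticForm ℝ M) (ξ η : CliffordAlgebra Q) : Prop :=
  ξ ∈ lipMon Q ∧ η ∈ lipMon Q ∧ ¬(ξ = 0 ∧ η = 0) ∧ ξ * cconj η ∈ paravec Q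

/-- Membership in `SL(2, $Γ)`: entries in the Lipschitz monoid, pseudo-determinant
`a^* d - c^* b = 1`, and `a b^*, c d^*, c^* a, d^* b` paravectors. -/
def IsSL2 (Q : QuadraticForm ℝ M) (a b c d : CliffordAlgebra Q) : Prop :=
  a ∈ lipMon Q ∧ b ∈ lipMon Q ∧ c ∈ lipMon Q ∧ d ∈ lipMon Q ∧
    reverse a * d - reverse c * b = 1 ∧
    a * reverse b ∈ paravec Q ∧ c * reverse d ∈ paravec Q ∧
    reverse c * a ∈ paravec Q ∧ reverse d * b ∈ paravec Q

theorem aux_cconj_mul {Q : QuadraticForm ℝ M} (x y : CliffordAlgebra Q) :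
    cconj (x * y) = cconj y * cconj x := by
  simp [cconj, reverse.map_mul]

theorem aux_cconj_algebraMap {Q : QuadraticForm ℝ M} (r : ℝ) :
    cconj (algebraMap ℝ (CliffordAlgebra Q) r) = algebraMap ℝ _ r := by
  simp [cconj]

theorem aux_cconj_cconj {Q : QuadraticForm ℝ M} (x : CliffordAlgebra Q) :
    cconj (cconj x) = x := by
  simp [cconj, reverse_involute]

theorem aux_mem {Q : QuadraticForm ℝ M} {x : CliffordAlgebra Q} :
    x ∈ paravec Q ↔ ∃ (r : ℝ) (m : M), x = algebraMap ℝ _ r + ι Q m := by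
  simp only [paravec, Submodule.mem_sup, LinearMap.mem_range, Algebra.linearMap_apply]
  constructor
  · rintro ⟨_, ⟨r, rfl⟩, _, ⟨m, rfl⟩, rfl⟩
    exact ⟨r, m, rfl⟩
  · rintro ⟨r, m, rfl⟩
    exact ⟨_, ⟨r, rfl⟩, _, ⟨m, rfl⟩, rfl⟩

theorem aux_involute_mem {Q : QuadraticForm ℝ M} {x : CliffordAlgebra Q}
    (hx : x ∈ paravec Q) : involute x ∈ paravec Q := by
  obtain ⟨r, m, rfl⟩ := aux_mem.1 hx
  exact aux_mem.2 ⟨r, -m, by simp⟩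

theorem aux_reverse {Q : QuadraticForm ℝ M} {x : CliffordAlgebra Q}
    (hx : x ∈ paravec Q) : reverse x = x := by
  obtain ⟨r, m, rfl⟩ := aux_mem.1 hx
  simp

theorem aux_norm {Q : QuadraticForm ℝ M} {u : (CliffordAlgebra Q)ˣ}
    (hu : u ∈ lipUnits Q) :
    ∃ r : ℝ, r ≠ 0 ∧ (u : CliffordAlgebra Q) * cconj (u : CliffordAlgebra Q)
      = algebraMap ℝ _ r := by
  have hne : ∀ (u : (CliffordAlgebra Q)ˣ) (r : ℝ),
      (u : CliffordAlgebra Q) * cconj (u : CliffordAlgebra Q) = algebraMap ℝ _ r → r ≠ 0 := by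
    rintro u r h rfl
    rw [map_zero, Units.mul_right_eq_zero] at h
    have h2 := aux_cconj_cconj (u : CliffordAlgebra Q)
    rw [h] at h2
    have h3 : (u : CliffordAlgebra Q) = 0 := by rw [← h2]; simp [cconj]
    exact u.ne_zero h3
  unfold lipUnits at hu
  induction hu using Subgroup.closure_induction with
  | mem x hx =>
    obtain ⟨r, m, h⟩ := aux_mem.1 hx
    have : (x : CliffordAlgebra Q) * cconj (x : CliffordAlgebra Q)
        = algebraMap ℝ _ (r * r - Q m) := by
      rw [h, map_sub, map_mul, ← ι_sq_scalar]
      simp only [cconj, map_add, AlgHom.commutes, involute_ι, reverse.commutes, map_neg, reverse_ι]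
      have := Algebra.commutes r (ι Q m)
      rw [add_mul, mul_add, mul_add, mul_neg, mul_neg, this]
      abel
    exact ⟨_, hne _ _ this, this⟩
  | one => exact ⟨1, one_ne_zero, by simp [cconj]⟩
  | mul x y _ _ hx hy =>
    obtain ⟨r, hr, h⟩ := hx
    obtain ⟨s, hs, h'⟩ := hy
    refine ⟨r * s, mul_ne_zero hr hs, ?_⟩
    rw [Units.val_mul, aux_cconj_mul, mul_assoc, ← mul_assoc (y : CliffordAlgebra Q), h',
      Algebra.commutes, ← mul_assoc, h, map_mul]
  | inv x _ hx =>
    obtain ⟨r, hr, h⟩ := hx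
    refine ⟨r⁻¹, inv_ne_zero hr, ?_⟩
    have h1 : cconj (x : CliffordAlgebra Q) = (↑x⁻¹ : CliffordAlgebra Q) * algebraMap ℝ _ r := by
      rw [← h, Units.inv_mul_cancel_left]
    have h2 : (↑x⁻¹ : CliffordAlgebra Q) = algebraMap ℝ _ r⁻¹ * cconj (x : CliffordAlgebra Q) := by
      rw [h1, Algebra.commutes, mul_assoc, ← map_mul, mul_inv_cancel₀ hr, map_one, mul_one]
    have h3 : cconj (x : CliffordAlgebra Q) * cconj (↑x⁻¹ : CliffordAlgebra Q) = 1 := by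
      rw [← aux_cconj_mul, Units.inv_mul]; simp [cconj]
    calc (↑x⁻¹ : CliffordAlgebra Q) * cconj (↑x⁻¹ : CliffordAlgebra Q)
        = (algebraMap ℝ _ r⁻¹ * cconj (x : CliffordAlgebra Q))
          * cconj (↑x⁻¹ : CliffordAlgebra Q) := by rw [← h2]
      _ = _ := by rw [mul_assoc, h3, mul_one]

theorem aux_involute_lip {Q : QuadraticForm ℝ M} {x : CliffordAlgebra Q}
    (hx : x ∈ lipMon Q) : involute x ∈ lipMon Q := by
  rcases hx with rfl | ⟨u, hu, rfl⟩
  · left; simp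
  · right
    refine ⟨Units.map (involute (Q := Q) : CliffordAlgebra Q →* CliffordAlgebra Q) u, ?_, rfl⟩
    have : lipUnits Q ≤ (lipUnits Q).comap
        (Units.map (involute (Q := Q) : CliffordAlgebra Q →* CliffordAlgebra Q)) := by
      conv_lhs => unfold lipUnits
      rw [Subgroup.closure_le]
      intro v hv
      exact Subgroup.subset_closure (aux_involute_mem hv)
    exact this hu

theorem aux_neg_lip {Q : QuadraticForm ℝ M} {x : CliffordAlgebra Q}
    (hx : x ∈ lipMon Q) : -x ∈ lipMon Q := by
  rcases hx with rfl | ⟨u, hu, rfl⟩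
  · left; simp
  · right
    refine ⟨(-1) * u, mul_mem (Subgroup.subset_closure ?_) hu, by simp⟩
    exact aux_mem.2 ⟨-1, 0, by simp⟩

theorem aux_sym {Q : QuadraticForm ℝ M} {ξ η : CliffordAlgebra Q}
    (h : IsSpinor Q ξ η) : reverse ξ * η = reverse η * ξ := by
  obtain ⟨-, hη, -, hp⟩ := h
  rcases hη with rfl | ⟨u, hu, rfl⟩
  · simp
  · obtain ⟨r, hr, hN⟩ := aux_norm hu
    have h1 : cconj (u : CliffordAlgebra Q) * u = algebraMap ℝ _ r := by
      have : cconj (u : CliffordAlgebra Q) = (↑u⁻¹ : CliffordAlgebra Q) * algebraMap ℝ _ r := by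
        rw [← hN, Units.inv_mul_cancel_left]
      rw [this, mul_assoc, Algebra.commutes, Units.inv_mul_cancel_left]
    have h2 : ξ * cconj (u : CliffordAlgebra Q) * u = r • ξ := by
      rw [mul_assoc, h1, ← Algebra.commutes, ← Algebra.smul_def]
    have hrev := aux_reverse hp
    generalize ξ * cconj (u : CliffordAlgebra Q) = p at h2 hrev
    have h3 : ξ = r⁻¹ • (p * u) := by rw [h2, smul_smul, inv_mul_cancel₀ hr, one_smul]
    rw [h3]
    simp [reverse.map_mul, hrev, mul_assoc]

/-- For a Lipschitz spinor `κ = (ξ,η)`, the complement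
`κ̌ = (η', −ξ')` is again a Lipschitz spinor; the generalised Hermitian form satisfies
`⟨κ, κ̌⟩ = conj(ξ) η' − conj(η) ξ' = 0`; and for all `x, y`, the real inner product
`(κx | κ̌y) = Re(conj(ξx)(η'y) − conj(ηx)(ξ'y))` vanishes. -/
theorem complement_spinor_orthogonal (n : ℕ) (ξ η : CliffordAlgebra (negQ n))
    (h : IsSpinor (negQ n) ξ η) :
    IsSpinor (negQ n) (involute η) (-(involute ξ)) ∧
    cconj ξ * involute η - cconj η * involute ξ = 0 ∧
    (∀ x y : CliffordAlgebra (negQ n),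
      clRe (cconj (ξ * x) * (involute η * y) +
        cconj (η * x) * ((-(involute ξ)) * y)) = 0) := by
  have key : cconj ξ * involute η - cconj η * involute ξ = 0 := by
    have := congrArg involute (aux_sym h)
    simp only [map_mul, ← reverse_involute] at this
    rw [sub_eq_zero]
    simpa only [cconj, reverse_involute] using this
  refine ⟨⟨aux_involute_lip h.2.1, aux_neg_lip (aux_involute_lip h.1), ?_, ?_⟩, key, ?_⟩
  · rintro ⟨h1, h2⟩
    refine h.2.2.1 ⟨?_, ?_⟩
    · rw [← involute_involute ξ, neg_eq_zero.1 h2, map_zero]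
    · rw [← involute_involute η, h1, map_zero]
  · have h1 := (paravec (negQ n)).neg_mem h.2.2.2
    convert h1 using 1
    rw [← aux_reverse h.2.2.2]
    simp [cconj, reverse.map_mul, reverse_involute]
  · intro x y
    have : cconj (ξ * x) * (involute η * y) + cconj (η * x) * ((-(involute ξ)) * y)
        = cconj x * (cconj ξ * involute η - cconj η * involute ξ) * y := by
      rw [aux_cconj_mul, aux_cconj_mul]
      noncomm_ring
    rw [this, key]
    simp [clRe]

end PaperCliff
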